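/- Let $G = (V \cup \{\delta\}, E)$ be a finite directed graph where $\delta$ is a cemetery vertex (no outgoing edges, every vertex connected to $\delta$ by a directed path), with no multiple edges, no self-loops, and such that $(x,y) \in E$ with $y \neq \delta$ implies $(y,x) \in E$. Let $(\alpha(e))_{e\in E}$ be positive weights and let $\omega$ be a Dirichlet environment with these parameters. For a fixed vertex $0 \in V$, define $\gamma^\omega(0) = \big(\sum_{\sigma: 0 \to \delta \text{ simple}} \omega_\sigma\big)^{-1}$, where $\omega_\sigma = \prod_{e \in \sigma}\omega(e)$ and the sum is over simple directed paths from $0$ to $\delta$. Then for every $s < \min_A \sum_{e \in \partial_+\underline{A}} \alpha(e)$ — the minimum over strongly connected edge-subsets $A$ with $0 \in \underline{A}$ — one has $E^{(\alpha)}[\gamma^\omega(0)^s] < \infty$. -/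

import Mathlib

open Finset MeasureTheory

noncomputable def dirPc (a : ℝ) (k : ℕ) : ℝ := Real.Gamma (a + k) / Real.Gamma a

lemma dirPc_pos {a : ℝ} (ha : 0 < a) (k : ℕ) : 0 < dirPc a k := by
  unfold dirPc
  have := Real.Gamma_pos_of_pos ha
  have : 0 < Real.Gamma (a + k) := Real.Gamma_pos_of_pos (by positivity)
  positivity

lemma dirPc_eq {a : ℝ} (ha : 0 < a) (k : ℕ) : dirPc a k = (ascPochhammer ℝ k).eval a := by
  have hG := (Real.Gamma_pos_of_pos ha).ne'
  induction k with
  | zero => simp [dirPc, hG]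
  | succ n ih =>
    rw [ascPochhammer_succ_right]
    simp only [Polynomial.eval_mul, ← ih, Polynomial.eval_add, Polynomial.eval_X, Polynomial.eval_natCast]
    unfold dirPc
    push_cast
    rw [← add_assoc, Real.Gamma_add_one (by positivity)]
    ring

lemma dirPc_choose {a : ℝ} (ha : 0 < a) (k : ℕ) :
    Ring.choose (a + k - 1) k = dirPc a k / (k.factorial : ℝ) := by
  rw [dirPc_eq ha, eq_div_iff (by positivity), mul_comm]
  have h := Ring.factorial_nsmul_multichoose_eq_ascPochhammer a k
  rw [nsmul_eq_mul] at h
  rw [Ring.choose, show a + (k:ℝ) - 1 - k + 1 = a by ring, h]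
  simp [Polynomial.ascPochhammer_smeval_eq_eval]

lemma dir_hasSum {a : ℝ} (ha : 0 < a) {X : ℝ} (h0 : 0 ≤ X) (h1 : X < 1) :
    HasSum (fun k : ℕ => dirPc a k / (k.factorial : ℝ) * X ^ k) ((1 - X) ^ (-a)) := by
  have h := (Real.one_div_one_sub_rpow_hasFPowerSeriesOnBall_zero a).hasSum (y := X) (by
    simp [enorm_eq_nnnorm]; rw [← NNReal.coe_lt_coe]; simpa [abs_of_nonneg h0] using h1)
  simp only [FormalMultilinearSeries.ofScalars_apply_eq, zero_add, dirPc_choose ha, smul_eq_mul] at h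
  rw [Real.rpow_neg (by linarith), ← one_div]
  exact h

/-- box -/
def dirBox {ι : Type*} [Fintype ι] [DecidableEq ι] (S : Finset ι) (N : ℕ) : Finset (ι → ℕ) :=
  Fintype.piFinset (fun e => if e ∈ S then range N else {0})

lemma dir_multinom {ι : Type*} [Fintype ι] [DecidableEq ι] (S : Finset ι) (N : ℕ) (c : ℕ → ℝ)
    (hc : ∀ k, 0 ≤ c k) (y : ι → ℝ) (hy : ∀ e ∈ S, 0 ≤ y e) :
    ∑ k ∈ range N, c k / (k.factorial : ℝ) * (∑ e ∈ S, y e) ^ k ≤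
      ∑ j ∈ dirBox S N, c (∑ e ∈ S, j e) * ∏ e ∈ S, (y e ^ j e / ((j e).factorial : ℝ)) := by
  have h1 : ∀ k, c k / (k.factorial : ℝ) * (∑ e ∈ S, y e) ^ k =
      ∑ j ∈ piAntidiag S k, c (∑ e ∈ S, j e) * ∏ e ∈ S, (y e ^ j e / ((j e).factorial : ℝ)) := by
    intro k
    rw [sum_pow_eq_sum_piAntidiag, mul_sum]
    refine sum_congr rfl fun j hj => ?_
    have hj' := (mem_piAntidiag.1 hj).1
    have hs := Nat.multinomial_spec S j
    change _ at hj'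
    rw [hj'] at hs ⊢
    rw [prod_div_distrib, ← hs]
    push_cast
    have : (∏ e ∈ S, ((j e).factorial : ℝ)) ≠ 0 := by positivity
    have h3 : (Nat.multinomial S j : ℝ) ≠ 0 := by
      have := Nat.multinomial_pos S j
      positivity
    field_simp
  simp_rw [h1]
  rw [← sum_biUnion]
  · refine sum_le_sum_of_subset_of_nonneg ?_ ?_
    · intro j hj
      simp only [mem_biUnion, mem_range, mem_piAntidiag] at hj
      obtain ⟨k, hk, hjk, hj⟩ := hj
      simp only [dirBox, Fintype.mem_piFinset]
      intro e
      split_ifs with he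
      · change ∑ e ∈ S, j e = k at hjk
        have := single_le_sum (f := j) (fun i _ => Nat.zero_le _) he
        simp only [mem_range]; omega
      · simp only [mem_singleton]; by_contra h; exact he (hj e h)
    · intro j _ _
      exact mul_nonneg (hc _) (prod_nonneg fun e he => div_nonneg (pow_nonneg (hy e he) _) (by positivity))
  · intro a _ b _ hab
    rw [Function.onFun, disjoint_left]
    intro j ha hb
    exact hab ((mem_piAntidiag.1 ha).1.symm.trans (mem_piAntidiag.1 hb).1)

lemma dir_box_sum {ι : Type*} [Fintype ι] [DecidableEq ι] (S : Finset ι) (N : ℕ) (α r : ι → ℝ)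
    (hα : ∀ e ∈ S, 0 < α e) (hr : ∀ e ∈ S, 0 ≤ r e ∧ r e < 1) :
    ∑ j ∈ dirBox S N, ∏ e ∈ S, (dirPc (α e) (j e) * (r e ^ j e / ((j e).factorial : ℝ))) ≤
      ∏ e ∈ S, (1 - r e) ^ (- α e) := by
  have h1 : ∀ j : ι → ℕ, ∏ e ∈ S, (dirPc (α e) (j e) * (r e ^ j e / ((j e).factorial : ℝ))) =
      ∏ e, if e ∈ S then (dirPc (α e) (j e) * (r e ^ j e / ((j e).factorial : ℝ))) else 1 := by
    intro j; simp [prod_ite_mem]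
  simp_rw [h1]
  unfold dirBox
  rw [← prod_univ_sum (f := fun e k => if e ∈ S then (dirPc (α e) k * (r e ^ k / (k.factorial : ℝ))) else 1)]
  have h2 : ∏ e ∈ S, (1 - r e) ^ (- α e) = ∏ e, if e ∈ S then (1 - r e) ^ (- α e) else 1 := by
    simp [prod_ite_mem]
  rw [h2]
  refine prod_le_prod (fun e _ => ?_) (fun e _ => ?_)
  · refine sum_nonneg fun k _ => ?_
    split_ifs with he
    · have := dirPc_pos (hα e he) k
      have := (hr e he).1
      positivity
    · simp
  · by_cases he : e ∈ S
    · simp only [he, if_true]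
      refine le_trans (le_of_eq ?_) (sum_le_hasSum (range N) (fun k _ => ?_) (dir_hasSum (hα e he) (hr e he).1 (hr e he).2))
      · refine sum_congr rfl fun k _ => by ring
      · have := dirPc_pos (hα e he) k
        have := (hr e he).1
        positivity
    · simp [he]

lemma dir_fiber {V : Type*} [Fintype V] [DecidableEq V]
    (E : Finset (Option V × Option V)) (hcem : ∀ e ∈ E, e.1 ≠ none)
    (f : Option V × Option V → ℝ) :
    ∏ v : V, ∏ e ∈ E.filter (fun e => e.1 = some v), f e = ∏ e ∈ E, f e := by
  rw [← prod_biUnion]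
  · refine prod_congr ?_ fun _ _ => rfl
    ext e
    simp only [mem_biUnion, mem_univ, true_and, mem_filter]
    constructor
    · rintro ⟨v, h, _⟩; exact h
    · intro h
      obtain ⟨v, hv⟩ := Option.ne_none_iff_exists'.1 (hcem e h)
      exact ⟨v, h, hv⟩
  · intro a _ b _ hab
    rw [Function.onFun, disjoint_left]
    intro e ha hb
    simp only [mem_filter] at ha hb
    exact hab (Option.some.inj (ha.2.symm.trans hb.2))

def dirKap {V : Type*} (J : V → (Option V × Option V) → ℕ) (e : Option V × Option V) : ℕ :=
  match e.1 with
  | none => 0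
  | some v => J v e

lemma dirKap_eq {V : Type*} (J : V → (Option V × Option V) → ℕ) (e : Option V × Option V) (v : V)
    (h : e.1 = some v) : dirKap J e = J v e := by
  simp [dirKap, h]

lemma dir_M0 {V : Type*} [Fintype V] [DecidableEq V]
    (E : Finset (Option V × Option V))
    (hcem : ∀ e ∈ E, e.1 ≠ none)
    (α : Option V × Option V → ℝ) (hα : ∀ e ∈ E, 0 < α e)
    (μ : Measure ((Option V × Option V) → ℝ)) [IsProbabilityMeasure μ]
    (hsupp : ∀ᵐ η ∂μ, ∀ e ∈ E, 0 < η e ∧ η e ≤ 1)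
    (hpos : ∀ v : V, 0 < ∑ e ∈ E.filter (fun e => e.1 = some v), α e)
    (hmom : ∀ κ : (Option V × Option V) → ℕ,
      (∫ η, ∏ e ∈ E, η e ^ κ e ∂μ) =
        ∏ v : V,
          ((Real.Gamma (∑ e ∈ E.filter (fun e => e.1 = some v), α e) /
            Real.Gamma ((∑ e ∈ E.filter (fun e => e.1 = some v), α e) +
              ∑ e ∈ E.filter (fun e => e.1 = some v), (κ e : ℝ))) *
          ∏ e ∈ E.filter (fun e => e.1 = some v),
            Real.Gamma (α e + κ e) / Real.Gamma (α e)))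
    (r : Option V × Option V → ℝ) (hr : ∀ e ∈ E, 0 ≤ r e ∧ r e < 1) (N : ℕ) :
    ∫⁻ η, ENNReal.ofReal (∏ v : V, ∑ k ∈ range N,
      dirPc (∑ e ∈ E.filter (fun e => e.1 = some v), α e) k / (k.factorial : ℝ) *
        (∑ e ∈ E.filter (fun e => e.1 = some v), r e * η e) ^ k) ∂μ ≤
    ENNReal.ofReal (∏ e ∈ E, (1 - r e) ^ (- α e)) := by
  set I : V → Finset (Option V × Option V) := fun v => E.filter (fun e => e.1 = some v) with hI
  have hIE : ∀ v, ∀ e ∈ I v, e ∈ E ∧ e.1 = some v := fun v e he => by simpa [hI] using he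
  set a : V → ℝ := fun v => ∑ e ∈ I v, α e with ha
  set B : Finset (V → (Option V × Option V) → ℕ) := Fintype.piFinset (fun v => dirBox (I v) N) with hB
  set C : (V → (Option V × Option V) → ℕ) → ℝ := fun J =>
    ∏ v, (dirPc (a v) (∑ e ∈ I v, J v e) * ∏ e ∈ I v, (r e ^ J v e / ((J v e).factorial : ℝ))) with hC
  have hC0 : ∀ J, 0 ≤ C J := by
    intro J
    refine prod_nonneg fun v _ => mul_nonneg (dirPc_pos (hpos v) _).le (prod_nonneg fun e he => ?_)
    have := (hr e (hIE v e he).1).1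
    positivity
  have hint : ∀ κ : (Option V × Option V) → ℕ, Integrable (fun η : (Option V × Option V) → ℝ => ∏ e ∈ E, η e ^ κ e) μ := by
    intro κ
    refine Integrable.of_bound (C := 1) (Measurable.aestronglyMeasurable (by fun_prop)) ?_
    filter_upwards [hsupp] with η hη
    rw [Real.norm_of_nonneg (prod_nonneg fun e he => pow_nonneg (hη e he).1.le _)]
    exact prod_le_one (fun e he => pow_nonneg (hη e he).1.le _) (fun e he => pow_le_one₀ (hη e he).1.le (hη e he).2)
  -- pointwise bound
  have hpt : ∀ᵐ η ∂μ, (∏ v : V, ∑ k ∈ range N,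
      dirPc (a v) k / (k.factorial : ℝ) * (∑ e ∈ I v, r e * η e) ^ k) ≤
      ∑ J ∈ B, C J * ∏ e ∈ E, η e ^ dirKap J e := by
    filter_upwards [hsupp] with η hη
    have hre : ∀ v, ∀ e ∈ I v, 0 ≤ r e * η e := fun v e he =>
      mul_nonneg (hr e (hIE v e he).1).1 (hη e (hIE v e he).1).1.le
    calc _ ≤ ∏ v : V, ∑ j ∈ dirBox (I v) N, dirPc (a v) (∑ e ∈ I v, j e) * ∏ e ∈ I v, ((r e * η e) ^ j e / ((j e).factorial : ℝ)) := by
          refine prod_le_prod (fun v _ => ?_) fun v _ => ?_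
          · refine sum_nonneg fun k _ => ?_
            have := dirPc_pos (hpos v) k
            have h2 : 0 ≤ ∑ e ∈ I v, r e * η e := sum_nonneg (hre v)
            exact mul_nonneg (div_nonneg this.le (by positivity)) (pow_nonneg h2 _)
          · exact dir_multinom (I v) N (dirPc (a v)) (fun k => (dirPc_pos (hpos v) k).le) _ (hre v)
      _ = _ := by
          rw [prod_univ_sum]
          refine sum_congr rfl fun J _ => ?_
          rw [← dir_fiber E hcem, ← prod_mul_distrib]
          refine prod_congr rfl fun v _ => ?_
          rw [mul_assoc, ← prod_mul_distrib]
          congr 1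
          refine prod_congr rfl fun e he => ?_
          rw [dirKap_eq J e v (hIE v e he).2, mul_pow]
          ring
  calc _ ≤ ∫⁻ η, ENNReal.ofReal (∑ J ∈ B, C J * ∏ e ∈ E, η e ^ dirKap J e) ∂μ := by
        refine lintegral_mono_ae ?_
        filter_upwards [hpt] with η hη
        exact ENNReal.ofReal_le_ofReal hη
    _ = ENNReal.ofReal (∫ η, ∑ J ∈ B, C J * ∏ e ∈ E, η e ^ dirKap J e ∂μ) := by
        rw [ofReal_integral_eq_lintegral_ofReal]
        · exact integrable_finsetSum _ fun J _ => (hint _).const_mul _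
        · filter_upwards [hsupp] with η hη
          exact sum_nonneg fun J _ => mul_nonneg (hC0 J) (prod_nonneg fun e he => pow_nonneg (hη e he).1.le _)
    _ ≤ _ := by
        refine ENNReal.ofReal_le_ofReal ?_
        rw [integral_finsetSum _ fun J _ => (hint _).const_mul _]
        simp_rw [integral_const_mul, hmom]
        rw [← dir_fiber E hcem]
        calc _ = ∑ J ∈ B, ∏ v, ∏ e ∈ I v, (dirPc (α e) (J v e) * (r e ^ J v e / ((J v e).factorial : ℝ))) := by
              refine sum_congr rfl fun J _ => ?_
              rw [hC, ← prod_mul_distrib]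
              refine prod_congr rfl fun v _ => ?_
              have h1 : ∑ e ∈ I v, (dirKap J e : ℝ) = ((∑ e ∈ I v, J v e : ℕ) : ℝ) := by
                push_cast
                exact sum_congr rfl fun e he => by rw [dirKap_eq J e v (hIE v e he).2]
              have h2 : ∏ e ∈ I v, Real.Gamma (α e + dirKap J e) / Real.Gamma (α e) =
                  ∏ e ∈ I v, dirPc (α e) (J v e) :=
                prod_congr rfl fun e he => by rw [dirKap_eq J e v (hIE v e he).2, dirPc]
              change _ * (Real.Gamma (a v) / Real.Gamma (a v + ∑ e ∈ I v, (dirKap J e : ℝ)) *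
                ∏ e ∈ I v, Real.Gamma (α e + dirKap J e) / Real.Gamma (α e)) = _
              rw [h1, h2, prod_mul_distrib]
              have h3 := dirPc_pos (hpos v) (∑ e ∈ I v, J v e)
              have h4 : Real.Gamma (a v) / Real.Gamma (a v + ((∑ e ∈ I v, J v e : ℕ) : ℝ)) =
                (dirPc (a v) (∑ e ∈ I v, J v e))⁻¹ := by rw [dirPc, inv_div]
              rw [h4]
              change 0 < dirPc (a v) _ at h3
              field_simp
          _ = ∏ v, ∑ j ∈ dirBox (I v) N, ∏ e ∈ I v, (dirPc (α e) (j e) * (r e ^ j e / ((j e).factorial : ℝ))) := by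
              rw [prod_univ_sum]
          _ ≤ _ := by
              refine prod_le_prod (fun v _ => ?_) fun v _ => ?_
              · refine sum_nonneg fun j _ => prod_nonneg fun e he => ?_
                have := dirPc_pos (hα e (hIE v e he).1) (j e)
                have := (hr e (hIE v e he).1).1
                positivity
              · exact dir_box_sum (I v) N α r (fun e he => hα e (hIE v e he).1) (fun e he => hr e (hIE v e he).1)

lemma dir_M1 {V : Type*} [Fintype V] [DecidableEq V]
    (E : Finset (Option V × Option V))
    (hcem : ∀ e ∈ E, e.1 ≠ none)
    (α : Option V × Option V → ℝ) (hα : ∀ e ∈ E, 0 < α e)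
    (μ : Measure ((Option V × Option V) → ℝ)) [IsProbabilityMeasure μ]
    (hsupp : ∀ᵐ η ∂μ, (∀ e ∈ E, 0 < η e ∧ η e ≤ 1) ∧
      ∀ v : V, ∑ e ∈ E.filter (fun e => e.1 = some v), η e = 1)
    (hpos : ∀ v : V, 0 < ∑ e ∈ E.filter (fun e => e.1 = some v), α e)
    (hmom : ∀ κ : (Option V × Option V) → ℕ,
      (∫ η, ∏ e ∈ E, η e ^ κ e ∂μ) =
        ∏ v : V,
          ((Real.Gamma (∑ e ∈ E.filter (fun e => e.1 = some v), α e) /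
            Real.Gamma ((∑ e ∈ E.filter (fun e => e.1 = some v), α e) +
              ∑ e ∈ E.filter (fun e => e.1 = some v), (κ e : ℝ))) *
          ∏ e ∈ E.filter (fun e => e.1 = some v),
            Real.Gamma (α e + κ e) / Real.Gamma (α e)))
    (t : Option V × Option V → ℝ) (ht : ∀ e ∈ E, 0 ≤ t e) :
    ∫⁻ η, ENNReal.ofReal (∏ v : V,
      (1 + ∑ e ∈ E.filter (fun e => e.1 = some v), t e * η e) ^
        (-∑ e ∈ E.filter (fun e => e.1 = some v), α e)) ∂μ ≤
    ENNReal.ofReal (∏ e ∈ E, (1 + t e) ^ (- α e)) := by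
  set I : V → Finset (Option V × Option V) := fun v => E.filter (fun e => e.1 = some v) with hI
  have hIE : ∀ v, ∀ e ∈ I v, e ∈ E ∧ e.1 = some v := fun v e he => by simpa [hI] using he
  set a : V → ℝ := fun v => ∑ e ∈ I v, α e with ha
  set T : ℝ := 1 + ∑ e ∈ E, t e with hT
  have hT1 : 1 ≤ T := by
    have := sum_nonneg ht
    linarith
  have hT0 : 0 < T := by linarith
  set r : Option V × Option V → ℝ := fun e => 1 - (1 + t e) / T with hr
  have hr01 : ∀ e ∈ E, 0 ≤ r e ∧ r e < 1 := by
    intro e he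
    have h1 := ht e he
    have h2 := single_le_sum ht he
    have h3 : 0 < (1 + t e) / T := by positivity
    have h4 : (1 + t e) / T ≤ 1 := by rw [div_le_one hT0]; linarith
    constructor <;> simp only [hr] <;> linarith
  set K : ℝ := ∏ e ∈ E, T ^ (- α e) with hK
  have hK0 : 0 ≤ K := prod_nonneg fun e _ => by positivity
  have hKv : K = ∏ v, T ^ (- a v) := by
    rw [hK, ← dir_fiber E hcem]
    refine prod_congr rfl fun v _ => ?_
    rw [ha, ← sum_neg_distrib, Real.rpow_sum_of_pos hT0]
  set F : ℕ → ((Option V × Option V) → ℝ) → ENNReal := fun N η => ENNReal.ofReal (∏ v : V, ∑ k ∈ range N,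
      dirPc (a v) k / (k.factorial : ℝ) * (∑ e ∈ I v, r e * η e) ^ k) with hF
  have hFm : ∀ N, Measurable (F N) := by
    intro N
    simp only [hF]
    fun_prop
  have hFb : ∀ N, ∫⁻ η, F N η ∂μ ≤ ENNReal.ofReal (∏ e ∈ E, (1 - r e) ^ (- α e)) :=
    fun N => dir_M0 E hcem α hα μ (hsupp.mono fun η h => h.1) hpos hmom r hr01 N
  have hlim : ∀ᵐ η ∂μ, ENNReal.ofReal (∏ v : V, (1 + ∑ e ∈ I v, t e * η e) ^ (- a v)) =
      ENNReal.ofReal K * Filter.liminf (fun N => F N η) Filter.atTop := by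
    filter_upwards [hsupp] with η ⟨hη, hη1⟩
    have hX : ∀ v, 1 - ∑ e ∈ I v, r e * η e = (1 + ∑ e ∈ I v, t e * η e) / T := by
      intro v
      have h1 : ∑ e ∈ I v, η e = 1 := hη1 v
      have h2 : ∑ e ∈ I v, r e * η e = ∑ e ∈ I v, η e - (∑ e ∈ I v, η e + ∑ e ∈ I v, t e * η e) / T := by
        rw [← sum_add_distrib, sum_div, ← sum_sub_distrib]
        exact sum_congr rfl fun e _ => by simp only [hr]; ring
      rw [h2, h1]; ring
    have hp : ∀ v, 0 < 1 + ∑ e ∈ I v, t e * η e := by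
      intro v
      have : 0 ≤ ∑ e ∈ I v, t e * η e := sum_nonneg fun e he =>
        mul_nonneg (ht e (hIE v e he).1) (hη e (hIE v e he).1).1.le
      linarith
    have hten : Filter.Tendsto (fun N => F N η) Filter.atTop
        (nhds (ENNReal.ofReal (∏ v : V, (1 - ∑ e ∈ I v, r e * η e) ^ (- a v)))) := by
      refine ENNReal.tendsto_ofReal (tendsto_finsetProd _ fun v _ => ?_)
      refine (dir_hasSum (hpos v) ?_ ?_).tendsto_sum_nat
      · exact sum_nonneg fun e he => mul_nonneg (hr01 e (hIE v e he).1).1 (hη e (hIE v e he).1).1.le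
      · have := hX v
        have : 0 < (1 + ∑ e ∈ I v, t e * η e) / T := div_pos (hp v) hT0
        linarith
    rw [hten.liminf_eq, ← ENNReal.ofReal_mul hK0, hKv, ← prod_mul_distrib]
    congr 1
    refine prod_congr rfl fun v _ => ?_
    rw [hX, ← Real.mul_rpow hT0.le (div_pos (hp v) hT0).le]
    congr 1
    field_simp
  calc _ = ENNReal.ofReal K * ∫⁻ η, Filter.liminf (fun N => F N η) Filter.atTop ∂μ := by
        rw [← lintegral_const_mul' _ _ ENNReal.ofReal_ne_top]
        exact lintegral_congr_ae hlim
    _ ≤ ENNReal.ofReal K * ENNReal.ofReal (∏ e ∈ E, (1 - r e) ^ (- α e)) := by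
        gcongr
        refine (lintegral_liminf_le hFm).trans ?_
        refine (Filter.liminf_le_liminf (Filter.Eventually.of_forall hFb)).trans ?_
        simp
    _ = _ := by
        rw [← ENNReal.ofReal_mul hK0, hK, ← prod_mul_distrib]
        congr 1
        refine prod_congr rfl fun e he => ?_
        have h1 := ht e he
        rw [← Real.mul_rpow hT0.le (by linarith [(hr01 e he).2])]
        congr 1
        simp only [hr]
        field_simp
        ring

lemma dir_tsum_pi {ι : Type*} [Fintype ι] (f : ι → ℕ → ENNReal) :
    ∑' k : ι → ℕ, ∏ i, f i (k i) ≤ ∏ i, ∑' n, f i n := by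
  classical
  rw [ENNReal.tsum_eq_iSup_sum]
  refine iSup_le fun S => ?_
  calc _ ≤ ∑ k ∈ Fintype.piFinset (fun i => S.image (fun k => k i)), ∏ i, f i (k i) := by
        refine sum_le_sum_of_subset fun k hk => ?_
        simp only [Fintype.mem_piFinset, mem_image]
        exact fun i => ⟨k, hk, rfl⟩
    _ = ∏ i, ∑ n ∈ S.image (fun k => k i), f i n := by rw [prod_univ_sum]
    _ ≤ _ := prod_le_prod' fun i _ => ENNReal.sum_le_tsum _

lemma dir_M2 {V : Type*} [Fintype V] [DecidableEq V]
    (E : Finset (Option V × Option V))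
    (hcem : ∀ e ∈ E, e.1 ≠ none)
    (α : Option V × Option V → ℝ) (hα : ∀ e ∈ E, 0 < α e)
    (μ : Measure ((Option V × Option V) → ℝ)) [IsProbabilityMeasure μ]
    (hsupp : ∀ᵐ η ∂μ, (∀ e ∈ E, 0 < η e ∧ η e ≤ 1) ∧
      ∀ v : V, ∑ e ∈ E.filter (fun e => e.1 = some v), η e = 1)
    (hmom : ∀ κ : (Option V × Option V) → ℕ,
      (∫ η, ∏ e ∈ E, η e ^ κ e ∂μ) =
        ∏ v : V,
          ((Real.Gamma (∑ e ∈ E.filter (fun e => e.1 = some v), α e) /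
            Real.Gamma ((∑ e ∈ E.filter (fun e => e.1 = some v), α e) +
              ∑ e ∈ E.filter (fun e => e.1 = some v), (κ e : ℝ))) *
          ∏ e ∈ E.filter (fun e => e.1 = some v),
            Real.Gamma (α e + κ e) / Real.Gamma (α e)))
    (c : ℝ) (hc0 : 0 < c) (hc1 : c < 1) :
    ∫⁻ η, ENNReal.ofReal (∏ e ∈ E, η e ^ (- (c * α e))) ∂μ < ⊤ := by
  have hpos : ∀ v : V, 0 < ∑ e ∈ E.filter (fun e => e.1 = some v), α e := by
    intro v
    obtain ⟨η, hη, h1⟩ := hsupp.exists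
    refine sum_pos (fun e he => hα e (mem_filter.1 he).1) ?_
    by_contra h
    rw [not_nonempty_iff_eq_empty] at h
    have := h1 v
    rw [h] at this
    simp at this
  set I : V → Finset (Option V × Option V) := fun v => E.filter (fun e => e.1 = some v) with hI
  have hIE : ∀ v, ∀ e ∈ I v, e ∈ E ∧ e.1 = some v := fun v e he => by simpa [hI] using he
  set a : V → ℝ := fun v => ∑ e ∈ I v, α e with ha
  set t : (E → ℕ) → Option V × Option V → ℝ := fun k e => if h : e ∈ E then 2 ^ (k ⟨e, h⟩) else 0 with ht
  have htE : ∀ k (e : E), t k e = 2 ^ (k e) := by intro k e; simp [ht]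
  have ht0 : ∀ k e, 0 ≤ t k e := by intro k e; simp only [ht]; split_ifs <;> positivity
  set C : ℝ := ∏ v : V, (1 + 2 * (#E : ℝ)) ^ a v with hC
  have hC0 : 0 ≤ C := prod_nonneg fun v _ => by positivity
  set G : (E → ℕ) → ENNReal := fun k => ENNReal.ofReal (∏ e ∈ E, t k e ^ (c * α e)) with hG
  set H : (E → ℕ) → ((Option V × Option V) → ℝ) → ENNReal := fun k η =>
    ENNReal.ofReal (∏ v : V, (1 + ∑ e ∈ I v, t k e * η e) ^ (- a v)) with hH
  have hHm : ∀ k, Measurable (H k) := by intro k; simp only [hH]; fun_prop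
  have hpt : ∀ᵐ η ∂μ, ENNReal.ofReal (∏ e ∈ E, η e ^ (- (c * α e))) ≤
      ENNReal.ofReal C * ∑' k, G k * H k η := by
    filter_upwards [hsupp] with η ⟨hη, hη1⟩
    have hex : ∀ e : E, ∃ n : ℕ, 1 / η e ≤ 2 ^ n ∧ (2:ℝ) ^ n * η e ≤ 2 := by
      intro e
      have h0 := (hη e e.2).1
      obtain ⟨n, h1, h2⟩ := exists_nat_pow_near (x := 1 / η e) (y := (2:ℝ))
        ((one_le_div h0).2 (hη e e.2).2) (by norm_num)
      refine ⟨n + 1, h2.le, ?_⟩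
      rw [le_div_iff₀ h0] at h1
      rw [pow_succ]; linarith
    choose k hk1 hk2 using hex
    refine le_trans ?_ (mul_le_mul_right (ENNReal.le_tsum k) _)
    rw [hG, hH, ← ENNReal.ofReal_mul (prod_nonneg fun e _ => by have := ht0 k e; positivity), ← ENNReal.ofReal_mul hC0]
    refine ENNReal.ofReal_le_ofReal ?_
    have h1 : ∏ e ∈ E, η e ^ (- (c * α e)) ≤ ∏ e ∈ E, t k e ^ (c * α e) := by
      refine prod_le_prod (fun e he => by have := (hη e he).1; positivity) fun e he => ?_
      have h0 := (hη e he).1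
      rw [Real.rpow_neg h0.le, ← Real.inv_rpow h0.le]
      have := hα e he
      refine Real.rpow_le_rpow (by positivity) ?_ (by positivity)
      rw [htE k ⟨e, he⟩, ← one_div]
      exact hk1 ⟨e, he⟩
    have h2 : 1 ≤ C * ∏ v : V, (1 + ∑ e ∈ I v, t k e * η e) ^ (- a v) := by
      rw [hC, ← prod_mul_distrib]
      refine le_trans (le_of_eq (prod_const_one (s := (univ : Finset V))).symm)
        (prod_le_prod (fun _ _ => zero_le_one) fun v _ => ?_)
      have hp : 0 ≤ ∑ e ∈ I v, t k e * η e := sum_nonneg fun e he =>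
        mul_nonneg (ht0 k e) (hη e (hIE v e he).1).1.le
      have hle : ∑ e ∈ I v, t k e * η e ≤ 2 * #E := by
        calc _ ≤ ∑ e ∈ I v, (2:ℝ) := sum_le_sum fun e he => by
              rw [htE k ⟨e, (hIE v e he).1⟩]; exact hk2 ⟨e, (hIE v e he).1⟩
          _ = 2 * #(I v) := by simp [mul_comm]
          _ ≤ _ := by
            have : #(I v) ≤ #E := card_le_card (filter_subset _ _)
            have : (#(I v) : ℝ) ≤ #E := by exact_mod_cast this
            linarith
      rw [Real.rpow_neg (by linarith), ← div_eq_mul_inv, one_le_div (by positivity)]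
      exact Real.rpow_le_rpow (by positivity) (by linarith) (hpos v).le
    have h3 : 0 ≤ ∏ e ∈ E, t k e ^ (c * α e) := prod_nonneg fun e _ => by have := ht0 k e; positivity
    calc _ ≤ _ := h1
      _ ≤ (∏ e ∈ E, t k e ^ (c * α e)) * (C * ∏ v : V, (1 + ∑ e ∈ I v, t k e * η e) ^ (- a v)) :=
        le_mul_of_one_le_right h3 h2
      _ = _ := by ring
  refine lt_of_le_of_lt (lintegral_mono_ae hpt) ?_
  rw [lintegral_const_mul' _ _ ENNReal.ofReal_ne_top,
    lintegral_tsum (fun k => ((hHm k).const_mul _).aemeasurable)]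
  refine ENNReal.mul_lt_top ENNReal.ofReal_lt_top ?_
  have hterm : ∀ k, ∫⁻ η, G k * H k η ∂μ ≤ ∏ e : E, (ENNReal.ofReal (2 ^ (-((1 - c) * α e)))) ^ (k e) := by
    intro k
    rw [lintegral_const_mul' _ _ ENNReal.ofReal_ne_top]
    refine (mul_le_mul_right (dir_M1 E hcem α hα μ hsupp hpos hmom (t k) (fun e _ => ht0 k e)) _).trans ?_
    rw [← ENNReal.ofReal_mul (prod_nonneg fun e _ => by have := ht0 k e; positivity), ← prod_mul_distrib,
      ← prod_coe_sort, ENNReal.ofReal_prod_of_nonneg (fun e _ => by have := ht0 k e; positivity)]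
    refine prod_le_prod' fun e _ => ?_
    rw [← ENNReal.ofReal_pow (by positivity)]
    refine ENNReal.ofReal_le_ofReal ?_
    rw [htE]
    have hae := hα e e.2
    have h2 : (0:ℝ) < 2 ^ k e := by positivity
    calc ((2:ℝ) ^ k e) ^ (c * α e) * (1 + 2 ^ k e) ^ (- α e) ≤ (2 ^ k e) ^ (c * α e) * (2 ^ k e) ^ (- α e) := by
          refine mul_le_mul_of_nonneg_left ?_ (by positivity)
          exact Real.rpow_le_rpow_of_nonpos h2 (by linarith) (by linarith)
      _ = (2 ^ k e) ^ (-((1 - c) * α e)) := by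
          rw [← Real.rpow_add h2]; congr 1; ring
      _ = _ := by
          rw [← Real.rpow_natCast, ← Real.rpow_natCast, ← Real.rpow_mul (by norm_num), ← Real.rpow_mul (by norm_num), mul_comm]
  refine lt_of_le_of_lt (ENNReal.tsum_le_tsum hterm) ?_
  refine lt_of_le_of_lt (dir_tsum_pi (fun (e : E) n => (ENNReal.ofReal (2 ^ (-((1 - c) * α e)))) ^ n)) ?_
  refine ENNReal.prod_lt_top fun e _ => ?_
  rw [ENNReal.tsum_geometric, ENNReal.inv_lt_top, tsub_pos_iff_lt, ENNReal.ofReal_lt_one]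
  have hae := hα e e.2
  exact Real.rpow_lt_one_of_one_lt_of_neg (by norm_num) (by nlinarith)

def dirP {V : Type*} (E : Finset (Option V × Option V)) : Option V → List (Option V × Option V) → Prop
  | v, [] => v = none
  | v, e :: l => e ∈ E ∧ e.1 = v ∧ v ∉ l.map Prod.fst ∧ dirP E e.2 l

lemma dirP_suffix {V : Type*} (E : Finset (Option V × Option V)) (u : Option V × Option V → ℝ)
    (hu : ∀ e, 0 ≤ u e) (a : Option V) (l : List (Option V × Option V)) :
    ∀ b, dirP E b l → a ∈ l.map Prod.fst → ∃ l', dirP E a l' ∧ (l'.map u).sum ≤ (l.map u).sum := by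
  induction l with
  | nil => intro b _ h; simp at h
  | cons e l ih =>
    intro b hb ha
    by_cases hab : a = b
    · exact ⟨e :: l, hab ▸ hb, le_rfl⟩
    · obtain ⟨h1, h2, h3, h4⟩ := hb
      rw [List.map_cons, List.mem_cons] at ha
      rcases ha with ha | ha
      · exact absurd (ha.trans h2) hab
      · obtain ⟨l', h5, h6⟩ := ih _ h4 ha
        refine ⟨l', h5, h6.trans ?_⟩
        simp [hu e]

lemma dirP_cons {V : Type*} (E : Finset (Option V × Option V)) (u : Option V × Option V → ℝ)
    (hu : ∀ e, 0 ≤ u e) (e : Option V × Option V) (he : e ∈ E) (l : List (Option V × Option V))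
    (hl : dirP E e.2 l) : ∃ l', dirP E e.1 l' ∧ (l'.map u).sum ≤ u e + (l.map u).sum := by
  by_cases h : e.1 ∈ l.map Prod.fst
  · obtain ⟨l', h1, h2⟩ := dirP_suffix E u hu _ l _ hl h
    exact ⟨l', h1, by linarith [hu e]⟩
  · exact ⟨e :: l, ⟨he, rfl, h, hl⟩, by simp⟩

lemma dirP_exists {V : Type*} (E : Finset (Option V × Option V)) (l : List (Option V × Option V)) :
    ∀ v : Option V, l ≠ [] → (∀ e ∈ l, e ∈ E) →
      l.IsChain (fun e f => e.2 = f.1) → l.head?.map Prod.fst = some v →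
      l.getLast?.map Prod.snd = some none → ∃ l', dirP E v l' := by
  induction l with
  | nil => intro v h; exact absurd rfl h
  | cons e l ih =>
    intro v _ hE hch hh hl
    simp only [List.head?_cons, Option.map_some, Option.some.injEq] at hh
    have : ∃ l', dirP E e.2 l' := by
      cases l with
      | nil =>
        simp at hl
        exact ⟨[], hl⟩
      | cons f l =>
        rw [List.isChain_cons_cons] at hch
        refine ih e.2 (by simp) (fun g hg => hE g (List.mem_cons_of_mem _ hg)) hch.2 ?_ ?_
        · simp [hch.1]
        · simpa using hl
    obtain ⟨l', hl'⟩ := this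
    obtain ⟨l'', h, _⟩ := dirP_cons E (fun _ => 0) (fun _ => le_rfl) e (hE e (by simp)) l' hl'
    exact ⟨l'', hh ▸ h⟩

lemma dirP_props {V : Type*} (E : Finset (Option V × Option V)) (l : List (Option V × Option V)) :
    ∀ v : Option V, dirP E v l → (∀ e ∈ l, e ∈ E) ∧ l.IsChain (fun e f => e.2 = f.1) ∧
      (l.map Prod.fst).Nodup ∧
      (l ≠ [] → l.head?.map Prod.fst = some v ∧ l.getLast?.map Prod.snd = some none) := by
  induction l with
  | nil => intro v _; simp
  | cons e l ih =>
    intro v ⟨h1, h2, h3, h4⟩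
    obtain ⟨i1, i2, i3, i4⟩ := ih _ h4
    refine ⟨?_, ?_, ?_, ?_⟩
    · intro f hf
      rcases List.mem_cons.1 hf with rfl | hf
      · exact h1
      · exact i1 f hf
    · cases l with
      | nil => simp
      | cons f l =>
        rw [List.isChain_cons_cons]
        have := (i4 (by simp)).1
        simp at this
        exact ⟨this.symm, i2⟩
    · rw [List.map_cons, List.nodup_cons]
      exact ⟨h2 ▸ h3, i3⟩
    · intro _
      refine ⟨by simp [h2], ?_⟩
      cases l with
      | nil => simpa [dirP] using h4
      | cons f l => simpa using (i4 (by simp)).2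

lemma dir_finite {V : Type*} [Fintype V] :
    {l : List (Option V × Option V) | (l.map Prod.fst).Nodup}.Finite := by
  refine (List.finite_length_le (Option V × Option V) (Fintype.card (Option V))).subset ?_
  intro l hl
  simpa using List.Nodup.length_le_card (show (l.map Prod.fst).Nodup from hl)

lemma dir_coarea {V : Type*} (E : Finset (Option V × Option V))
    (d : Option V → ℝ) (D s : ℝ) (hs0 : 0 ≤ s) (x u : Option V × Option V → ℝ)
    (hx : ∀ e ∈ E, 0 ≤ x e) (hu : ∀ e, 0 ≤ u e)
    (htri : ∀ e ∈ E, d e.1 ≤ u e + d e.2)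
    (hcut : ∀ t, 0 ≤ t → t < D → s ≤ ∑ e ∈ E.filter (fun e => t < d e.1 ∧ ¬ t < d e.2), x e) :
    s * D ≤ ∑ e ∈ E, x e * u e := by
  have hR : 0 ≤ ∑ e ∈ E, x e * u e := sum_nonneg fun e he => mul_nonneg (hx e he) (hu e)
  rw [← ENNReal.ofReal_le_ofReal_iff hR]
  calc ENNReal.ofReal (s * D) = ∫⁻ t in Set.Ico 0 D, ENNReal.ofReal s := by
        rw [setLIntegral_const, Real.volume_Ico, sub_zero, ENNReal.ofReal_mul hs0]
    _ ≤ ∫⁻ t in Set.Ico 0 D, ∑ e ∈ E, ENNReal.ofReal (x e) * (Set.Ico (d e.2) (d e.1)).indicator 1 t := by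
        refine setLIntegral_mono' measurableSet_Ico fun t ht => ?_
        refine (ENNReal.ofReal_le_ofReal (hcut t ht.1 ht.2)).trans ?_
        rw [ENNReal.ofReal_sum_of_nonneg (fun e he => hx e (mem_filter.1 he).1), sum_filter]
        refine sum_le_sum fun e _ => ?_
        split_ifs with h
        · rw [Set.indicator_of_mem (by exact ⟨not_lt.1 h.2, h.1⟩)]; simp
        · exact bot_le
    _ ≤ ∫⁻ t, ∑ e ∈ E, ENNReal.ofReal (x e) * (Set.Ico (d e.2) (d e.1)).indicator 1 t :=
        setLIntegral_le_lintegral _ _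
    _ = ∑ e ∈ E, ENNReal.ofReal (x e) * ENNReal.ofReal (d e.1 - d e.2) := by
        rw [lintegral_finsetSum]
        · refine sum_congr rfl fun e _ => ?_
          rw [lintegral_const_mul' _ _ ENNReal.ofReal_ne_top, lintegral_indicator_one measurableSet_Ico,
            Real.volume_Ico]
        · intro e _
          exact ((measurable_one).indicator measurableSet_Ico).const_mul _
    _ ≤ ∑ e ∈ E, ENNReal.ofReal (x e * u e) := by
        refine sum_le_sum fun e he => ?_
        rw [ENNReal.ofReal_mul (hx e he)]
        gcongr
        linarith [htri e he]
    _ = _ := by rw [ENNReal.ofReal_sum_of_nonneg fun e he => mul_nonneg (hx e he) (hu e)]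

lemma dir_walk {V : Type*} (A : Finset (Option V × Option V)) {u v : Option V}
    (h : Relation.TransGen (fun a b => (a, b) ∈ A) u v) :
    ∃ l : List (Option V × Option V), l ≠ [] ∧ (∀ e ∈ l, e ∈ A) ∧
          l.IsChain (fun e f => e.2 = f.1) ∧ l.head?.map Prod.fst = some u ∧
          l.getLast?.map Prod.snd = some v := by
  induction h using Relation.TransGen.head_induction_on with
  | @single a h => exact ⟨[(a, v)], by simp, by simpa using h, by simp, by simp, by simp⟩
  | @head a c h _ ih =>
    obtain ⟨l, h1, h2, h3, h4, h5⟩ := ih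
    refine ⟨(a, c) :: l, by simp, ?_, ?_, by simp, ?_⟩
    · intro e he
      rcases List.mem_cons.1 he with rfl | he
      · exact h
      · exact h2 e he
    · cases l with
      | nil => simp
      | cons f l =>
        simp at h4
        rw [List.isChain_cons_cons]
        exact ⟨h4.symm, h3⟩
    · cases l with
      | nil => exact absurd rfl h1
      | cons f l => simpa using h5

lemma dir_cut {V : Type*} [Fintype V] [DecidableEq V]
    (E : Finset (Option V × Option V)) (z : V)
    (hsym : ∀ e ∈ E, e.2 ≠ none → (e.2, e.1) ∈ E)
    (α : Option V × Option V → ℝ) (hα : ∀ e ∈ E, 0 < α e) (s : ℝ)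
    (hs : ∀ A : Finset (Option V × Option V), A ⊆ E →
      (∀ u ∈ A.image Prod.fst ∪ A.image Prod.snd, ∀ v ∈ A.image Prod.fst ∪ A.image Prod.snd,
        ∃ l : List (Option V × Option V), l ≠ [] ∧ (∀ e ∈ l, e ∈ A) ∧
          l.IsChain (fun e f => e.2 = f.1) ∧ l.head?.map Prod.fst = some u ∧
          l.getLast?.map Prod.snd = some v) →
      some z ∈ A.image Prod.fst →
      s < ∑ e ∈ E.filter (fun e => e.1 ∈ A.image Prod.fst ∧ e.2 ∉ A.image Prod.fst), α e)
    (K : Finset (Option V)) (hK0 : none ∉ K) (hKz : some z ∈ K) (w : Option V) (hw : w ∈ K)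
    (hzw : (some z, w) ∈ E) :
    s < ∑ e ∈ E.filter (fun e => e.1 ∈ K ∧ e.2 ∉ K), α e := by
  classical
  let R : Option V → Option V → Prop := fun a b => (a, b) ∈ E ∧ a ∈ K ∧ b ∈ K
  let K' : Option V → Prop := Relation.ReflTransGen R (some z)
  have hne : ∀ a ∈ K, a ≠ none := fun a ha h => hK0 (h ▸ ha)
  have hRs : ∀ a b, R a b → R b a := fun a b h => ⟨hsym _ h.1 (hne _ h.2.2), h.2.2, h.2.1⟩
  have hK'K : ∀ a, K' a → a ∈ K := by
    intro a h
    induction h with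
    | refl => exact hKz
    | tail _ h _ => exact h.2.2
  set A := E.filter (fun e => K' e.1 ∧ K' e.2) with hA
  have hRA : ∀ a b, K' a → R a b → (a, b) ∈ A := fun a b h h' =>
    mem_filter.2 ⟨h'.1, h, Relation.ReflTransGen.tail h h'⟩
  have hmem : ∀ u ∈ A.image Prod.fst ∪ A.image Prod.snd, K' u := by
    intro u hu
    simp only [mem_union, mem_image, hA, mem_filter] at hu
    rcases hu with ⟨e, he, rfl⟩ | ⟨e, he, rfl⟩
    · exact he.2.1
    · exact he.2.2
  have hto : ∀ a, K' a → Relation.ReflTransGen (fun a b => (a, b) ∈ A) (some z) a ∧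
      Relation.ReflTransGen (fun a b => (a, b) ∈ A) a (some z) := by
    intro a h
    induction h with
    | refl => exact ⟨.refl, .refl⟩
    | @tail b c h h' ih =>
      exact ⟨ih.1.tail (hRA _ _ h h'), Relation.ReflTransGen.head (hRA _ _ (Relation.ReflTransGen.tail h h') (hRs _ _ h')) ih.2⟩
  have hRzw : R (some z) w := ⟨hzw, hKz, hw⟩
  have hKw : K' w := Relation.ReflTransGen.single hRzw
  have hzA : (some z, w) ∈ A := hRA _ _ .refl hRzw
  have hzA' : (w, some z) ∈ A := hRA _ _ hKw (hRs _ _ hRzw)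
  refine (hs A (filter_subset _ _) ?_ (mem_image.2 ⟨_, hzA, rfl⟩)).trans_le ?_
  · intro u hu v hv
    refine dir_walk A ?_
    have h1 := (hto u (hmem u hu)).2
    have h2 := (hto v (hmem v hv)).1
    exact Relation.TransGen.trans_right h1 (Relation.TransGen.trans_left
      (Relation.TransGen.head hzA (Relation.TransGen.single hzA')) h2)
  · refine sum_le_sum_of_subset_of_nonneg ?_ fun e he _ => (hα e (mem_filter.1 he).1).le
    intro e he
    simp only [mem_filter] at he ⊢
    obtain ⟨heE, h1, h2⟩ := he
    have hK1 : K' e.1 := hmem _ (mem_union_left _ h1)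
    refine ⟨heE, hK'K _ hK1, fun h => h2 ?_⟩
    have hR : R e.1 e.2 := ⟨heE, hK'K _ hK1, h⟩
    exact mem_image.2 ⟨(e.2, e.1), hRA _ _ (Relation.ReflTransGen.tail hK1 hR) (hRs _ _ hR), rfl⟩

lemma dir_prod_exp {ι : Type*} (η u : ι → ℝ) (l : List ι) (h : ∀ e ∈ l, η e = Real.exp (- u e)) :
    (l.map η).prod = Real.exp (-(l.map u).sum) := by
  induction l with
  | nil => simp
  | cons e l ih =>
    simp only [List.map_cons, List.prod_cons, List.sum_cons]
    rw [ih fun f hf => h f (List.mem_cons_of_mem _ hf), h e (by simp), ← Real.exp_add]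
    congr 1; ring

lemma dir_path {V : Type*} [Fintype V] [DecidableEq V]
    (E : Finset (Option V × Option V)) (z : V)
    (hex : ∀ v, ∃ l, dirP E v l)
    (α : Option V × Option V → ℝ) (hα : ∀ e ∈ E, 0 < α e) (s c : ℝ) (hs0 : 0 < s) (hc : 0 < c)
    (hcut : ∀ K : Finset (Option V), none ∉ K → some z ∈ K → (∃ w ∈ K, (some z, w) ∈ E) →
      s ≤ ∑ e ∈ E.filter (fun e => e.1 ∈ K ∧ e.2 ∉ K), c * α e)
    (η : Option V × Option V → ℝ) (hη : ∀ e ∈ E, 0 < η e ∧ η e ≤ 1)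
    (hη1 : ∑ e ∈ E.filter (fun e => e.1 = some z), η e = 1) :
    ∃ l, dirP E (some z) l ∧
      (1 / (#E : ℝ)) ^ s * ∏ e ∈ E, η e ^ (c * α e) ≤ ((l.map η).prod) ^ s := by
  classical
  obtain ⟨e0, he0, he0z, hge⟩ : ∃ e ∈ E, e.1 = some z ∧ 1 / (#E : ℝ) ≤ η e := by
    by_contra! hcon
    have hne : (E.filter (fun e => e.1 = some z)).Nonempty := by
      by_contra h
      rw [not_nonempty_iff_eq_empty] at h
      rw [h] at hη1; simp at hη1
    have hlt : ∑ e ∈ E.filter (fun e => e.1 = some z), η e <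
        ∑ e ∈ E.filter (fun e => e.1 = some z), 1 / (#E : ℝ) :=
      sum_lt_sum_of_nonempty hne fun e he => hcon e (mem_filter.1 he).1 (mem_filter.1 he).2
    rw [hη1, sum_const, nsmul_eq_mul, mul_one_div] at hlt
    have hle : (#(E.filter (fun e => e.1 = some z)) : ℝ) ≤ #E := by
      exact_mod_cast card_le_card (filter_subset _ _)
    exact absurd hlt (not_lt.2 (div_le_one_of_le₀ hle (by positivity)))
  have hn : (1:ℝ) ≤ #E := by exact_mod_cast card_pos.2 ⟨e0, he0⟩
  have hn0 : 0 < 1 / (#E : ℝ) := by positivity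
  have hn1 : 1 / (#E : ℝ) ≤ 1 := by rw [div_le_one (by linarith)]; exact hn
  by_cases hnone : e0.2 = none
  · refine ⟨[e0], ⟨he0, he0z, by simp, hnone⟩, ?_⟩
    simp only [List.map_cons, List.map_nil, List.prod_cons, List.prod_nil, mul_one]
    have h1 : ∏ e ∈ E, η e ^ (c * α e) ≤ 1 :=
      prod_le_one (fun e he => (Real.rpow_pos_of_pos (hη e he).1 _).le)
        (fun e he => Real.rpow_le_one (hη e he).1.le (hη e he).2 (mul_pos hc (hα e he)).le)
    calc _ ≤ (1 / (#E : ℝ)) ^ s := mul_le_of_le_one_right (by positivity) h1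
      _ ≤ _ := Real.rpow_le_rpow hn0.le hge hs0.le
  set u : Option V × Option V → ℝ := fun e => if e ∈ E ∧ e ≠ e0 then - Real.log (η e) else 0 with hu
  have hu0 : ∀ e, 0 ≤ u e := by
    intro e
    simp only [hu]
    split_ifs with h
    · have := Real.log_nonpos (hη e h.1).1.le (hη e h.1).2
      linarith
    · exact le_rfl
  have hmin : ∀ v, ∃ l, dirP E v l ∧ ∀ l', dirP E v l' → (l.map u).sum ≤ (l'.map u).sum := by
    intro v
    have hf : {l | dirP E v l}.Finite := dir_finite.subset fun l hl => (dirP_props E l v hl).2.2.1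
    obtain ⟨l, h1, h2⟩ := Set.exists_min_image _ (fun l => (l.map u).sum) hf (hex v)
    exact ⟨l, h1, fun l' hl' => h2 l' hl'⟩
  choose σ hσ hσm using hmin
  set d : Option V → ℝ := fun v => ((σ v).map u).sum with hd
  have htri : ∀ e ∈ E, d e.1 ≤ u e + d e.2 := by
    intro e he
    obtain ⟨l', h1, h2⟩ := dirP_cons E u hu0 e he (σ e.2) (hσ e.2)
    exact (hσm _ l' h1).trans h2
  have hdn : d none ≤ 0 := by simpa using hσm none [] rfl
  have hue0 : u e0 = 0 := by simp [hu]
  have hco : s * d (some z) ≤ ∑ e ∈ E, (c * α e) * u e := by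
    refine dir_coarea E d (d (some z)) s hs0.le _ u (fun e he => (mul_pos hc (hα e he)).le) hu0 htri ?_
    intro t ht0 htD
    refine (hcut (univ.filter fun v => t < d v) ?_ ?_ ⟨e0.2, ?_, ?_⟩).trans (le_of_eq ?_)
    · simp; linarith
    · simpa using htD
    · have := htri e0 he0
      rw [he0z, hue0] at this
      simp; linarith
    · rw [← he0z]; exact he0
    · refine sum_congr ?_ fun _ _ => rfl
      ext e; simp
  refine ⟨σ (some z), hσ _, ?_⟩
  have hprod : 1 / (#E : ℝ) * Real.exp (- d (some z)) ≤ ((σ (some z)).map η).prod := by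
    have h1 := hσ (some z)
    simp only [hd]
    cases hl : σ (some z) with
    | nil => rw [hl] at h1; simp [dirP] at h1
    | cons e l =>
      rw [hl] at h1
      obtain ⟨h2, h3, h4, h5⟩ := h1
      have h6 : (l.map η).prod = Real.exp (-(l.map u).sum) := by
        refine dir_prod_exp η u l fun f hf => ?_
        have hfE := (dirP_props E l _ h5).1 f hf
        have hf0 : f ≠ e0 := by
          rintro rfl
          exact h4 (he0z ▸ List.mem_map_of_mem hf)
        simp only [hu, hfE, hf0, ne_eq, not_false_eq_true, and_self, if_true, neg_neg]
        rw [Real.exp_log (hη f hfE).1]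
      have h7 : 1 / (#E : ℝ) * Real.exp (- u e) ≤ η e := by
        by_cases he : e = e0
        · rw [he, hue0]; simpa using hge
        · simp only [hu, h2, he, ne_eq, not_false_eq_true, and_self, if_true, neg_neg]
          rw [Real.exp_log (hη e h2).1]
          exact mul_le_of_le_one_left (hη e h2).1.le hn1
      simp only [List.map_cons, List.prod_cons, List.sum_cons]
      rw [neg_add, Real.exp_add, ← mul_assoc, h6]
      exact mul_le_mul_of_nonneg_right h7 (Real.exp_pos _).le
  calc (1 / (#E : ℝ)) ^ s * ∏ e ∈ E, η e ^ (c * α e)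
      ≤ (1 / (#E : ℝ)) ^ s * Real.exp (- (s * d (some z))) := by
        refine mul_le_mul_of_nonneg_left ?_ (by positivity)
        calc ∏ e ∈ E, η e ^ (c * α e) ≤ ∏ e ∈ E, Real.exp (- (c * α e * u e)) := by
              refine prod_le_prod (fun e he => (Real.rpow_pos_of_pos (hη e he).1 _).le) fun e he => ?_
              by_cases h : e = e0
              · rw [h, hue0]
                simpa using Real.rpow_le_one (hη e0 he0).1.le (hη e0 he0).2 (mul_pos hc (hα e0 he0)).le
              · rw [Real.rpow_def_of_pos (hη e he).1]
                simp only [hu, he, h, ne_eq, not_false_eq_true, and_self, if_true]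
                rw [Real.exp_le_exp]
                linarith
          _ = Real.exp (- ∑ e ∈ E, c * α e * u e) := by rw [← Real.exp_sum, sum_neg_distrib]
          _ ≤ _ := by rw [Real.exp_le_exp]; linarith
    _ = (1 / (#E : ℝ) * Real.exp (- d (some z))) ^ s := by
        rw [Real.mul_rpow hn0.le (Real.exp_pos _).le, ← Real.exp_mul]
        congr 2; ring
    _ ≤ _ := Real.rpow_le_rpow (by positivity) hprod hs0.le

/-- Finite moments of the acceleration function for a Dirichlet environment on a finite
directed graph with cemetery vertex `δ`: for every
`s < min { ∑_{e ∈ ∂₊(underline A)} α(e) : A strongly connected, 0 ∈ underline A }`,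
`E^{(α)}[γ^ω(0)^s] < ∞`, where `γ^ω(0)⁻¹ = ∑_{σ : 0 → δ simple} ω_σ`. -/
theorem stmt12 {V : Type*} [Fintype V] [DecidableEq V]
    (E : Finset (Option V × Option V)) (z : V)
    (hcem : ∀ e ∈ E, e.1 ≠ none)                  -- no edge exits the cemetery `none`
    (hnoloop : ∀ e ∈ E, e.1 ≠ e.2)                 -- no elementary loops
    (hsym : ∀ e ∈ E, e.2 ≠ none → (e.2, e.1) ∈ E)  -- symmetry away from the cemetery
    -- every vertex is connected to the cemetery by a directed path of edges of `E`
    (hconn : ∀ v : V, ∃ l : List (Option V × Option V), l ≠ [] ∧ (∀ e ∈ l, e ∈ E) ∧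
      l.Chain' (fun e f => e.2 = f.1) ∧ l.head?.map Prod.fst = some (some v) ∧
      l.getLast?.map Prod.snd = some none)
    (α : Option V × Option V → ℝ) (hα : ∀ e ∈ E, 0 < α e)
    (μ : Measure ((Option V × Option V) → ℝ)) [IsProbabilityMeasure μ]
    -- `μ` is supported on elliptic environments
    (hsupp : ∀ᵐ η ∂μ, (∀ e ∈ E, 0 < η e ∧ η e ≤ 1) ∧
      ∀ v : V, ∑ e ∈ E.filter (fun e => e.1 = some v), η e = 1)
    -- `μ` is the Dirichlet distribution with parameters `α`: joint moments at each
    -- vertex are those of independent Dirichlet vectors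
    (hmom : ∀ κ : (Option V × Option V) → ℕ,
      (∫ η, ∏ e ∈ E, η e ^ κ e ∂μ) =
        ∏ v : V,
          ((Real.Gamma (∑ e ∈ E.filter (fun e => e.1 = some v), α e) /
            Real.Gamma ((∑ e ∈ E.filter (fun e => e.1 = some v), α e) +
              ∑ e ∈ E.filter (fun e => e.1 = some v), (κ e : ℝ))) *
          ∏ e ∈ E.filter (fun e => e.1 = some v),
            Real.Gamma (α e + κ e) / Real.Gamma (α e)))
    (s : ℝ)
    -- `s` is smaller than the weight exiting every strongly connected edge-set
    -- containing `z` among its tails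
    (hs : ∀ A : Finset (Option V × Option V), A ⊆ E →
      (∀ u ∈ A.image Prod.fst ∪ A.image Prod.snd, ∀ v ∈ A.image Prod.fst ∪ A.image Prod.snd,
        ∃ l : List (Option V × Option V), l ≠ [] ∧ (∀ e ∈ l, e ∈ A) ∧
          l.Chain' (fun e f => e.2 = f.1) ∧ l.head?.map Prod.fst = some u ∧
          l.getLast?.map Prod.snd = some v) →
      some z ∈ A.image Prod.fst →
      s < ∑ e ∈ E.filter (fun e => e.1 ∈ A.image Prod.fst ∧ e.2 ∉ A.image Prod.fst), α e) :
    -- simple paths from `z` to the cemetery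
    let SimplePath : List (Option V × Option V) → Prop := fun l =>
      l ≠ [] ∧ (∀ e ∈ l, e ∈ E) ∧ l.Chain' (fun e f => e.2 = f.1) ∧
        l.head?.map Prod.fst = some (some z) ∧ l.getLast?.map Prod.snd = some none ∧
        (l.map Prod.fst).Nodup
    let γ : ((Option V × Option V) → ℝ) → ℝ := fun η =>
      (∑' p : {l : List (Option V × Option V) // SimplePath l},
        ((p : List (Option V × Option V)).map η).prod)⁻¹
    ∫⁻ η, ENNReal.ofReal ((γ η) ^ s) ∂μ < ⊤ := by
  intro SimplePath γ
  have hex : ∀ v, ∃ l, dirP E v l := by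
    intro v
    cases v with
    | none => exact ⟨[], rfl⟩
    | some v =>
      obtain ⟨l, h1, h2, h3, h4, h5⟩ := hconn v
      exact dirP_exists E l (some v) h1 h2 h3 h4 h5
  have hfin : Finite {l : List (Option V × Option V) // SimplePath l} :=
    (dir_finite.subset (fun l (hl : SimplePath l) => hl.2.2.2.2.2)).to_subtype
  haveI := Fintype.ofFinite {l : List (Option V × Option V) // SimplePath l}
  have hnn : ∀ η : (Option V × Option V) → ℝ, (∀ e ∈ E, 0 < η e ∧ η e ≤ 1) →
      ∀ p : {l : List (Option V × Option V) // SimplePath l}, 0 ≤ (p.1.map η).prod ∧ (p.1.map η).prod ≤ 1 := by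
    intro η hη p
    have hp := p.2.2.1
    generalize p.1 = l at hp
    induction l with
    | nil => simp
    | cons e l ih =>
      obtain ⟨h1, h2⟩ := ih fun f hf => hp f (List.mem_cons_of_mem _ hf)
      have h3 := hη e (hp e (by simp))
      rw [List.map_cons, List.prod_cons]
      exact ⟨mul_nonneg h3.1.le h1, mul_le_one₀ h3.2 h1 h2⟩
  by_cases hs0 : 0 < s
  · obtain ⟨c, hc0, hc1, hcut⟩ : ∃ c : ℝ, 0 < c ∧ c < 1 ∧ ∀ K : Finset (Option V), none ∉ K →
        some z ∈ K → (∃ w ∈ K, (some z, w) ∈ E) →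
        s ≤ ∑ e ∈ E.filter (fun e => e.1 ∈ K ∧ e.2 ∉ K), c * α e := by
      have hev : ∀ᶠ c : ℝ in nhdsWithin 1 (Set.Iio 1), ∀ K : Finset (Option V), none ∉ K →
          some z ∈ K → (∃ w ∈ K, (some z, w) ∈ E) →
          s ≤ ∑ e ∈ E.filter (fun e => e.1 ∈ K ∧ e.2 ∉ K), c * α e := by
        rw [Filter.eventually_all]
        intro K
        by_cases hK : none ∉ K ∧ some z ∈ K ∧ (∃ w ∈ K, (some z, w) ∈ E)
        · obtain ⟨k1, k2, w, k3, k4⟩ := hK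
          have hlt := dir_cut E z hsym α hα s hs K k1 k2 w k3 k4
          have hcont : Filter.Tendsto (fun c : ℝ => ∑ e ∈ E.filter (fun e => e.1 ∈ K ∧ e.2 ∉ K), c * α e)
              (nhdsWithin 1 (Set.Iio 1)) (nhds (∑ e ∈ E.filter (fun e => e.1 ∈ K ∧ e.2 ∉ K), 1 * α e)) := by
            refine Filter.Tendsto.mono_left ?_ nhdsWithin_le_nhds
            exact Continuous.tendsto (by fun_prop) 1
          simp only [one_mul] at hcont
          filter_upwards [hcont.eventually_const_lt hlt] with c hc _ _ _
          exact hc.le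
        · exact Filter.Eventually.of_forall fun c h1 h2 h3 => absurd ⟨h1, h2, h3⟩ hK
      have h0 : ∀ᶠ c : ℝ in nhdsWithin 1 (Set.Iio 1), 0 < c :=
        nhdsWithin_le_nhds (lt_mem_nhds one_pos)
      obtain ⟨c, ⟨h1, h2⟩, h3⟩ := ((hev.and h0).and self_mem_nhdsWithin).exists
      exact ⟨c, h2, h3, h1⟩
    have hM := dir_M2 E hcem α hα μ hsupp hmom c hc0 hc1
    refine lt_of_le_of_lt (b := ∫⁻ η, ENNReal.ofReal ((#E : ℝ) ^ s) *
      ENNReal.ofReal (∏ e ∈ E, η e ^ (- (c * α e))) ∂μ) (lintegral_mono_ae ?_) ?_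
    · filter_upwards [hsupp] with η ⟨hη, hη1⟩
      obtain ⟨l, hl, hle⟩ := dir_path E z hex α hα s c hs0 hc0 hcut η hη (hη1 z)
      have hne : l ≠ [] := by
        rintro rfl
        simp [dirP] at hl
      obtain ⟨p1, p2, p3, p4⟩ := dirP_props E l _ hl
      have hSP : SimplePath l := ⟨hne, p1, p2, (p4 hne).1, (p4 hne).2, p3⟩
      have hn : (0:ℝ) < #E := by
        obtain ⟨e, he⟩ := List.exists_mem_of_ne_nil l hne
        exact_mod_cast card_pos.2 ⟨e, p1 e he⟩
      rw [← ENNReal.ofReal_mul (by positivity)]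
      refine ENNReal.ofReal_le_ofReal ?_
      have hpl : 0 < (l.map η).prod := by
        refine List.prod_pos ?_
        intro x hx
        obtain ⟨e, he, rfl⟩ := List.mem_map.1 hx
        exact (hη e (p1 e he)).1
      have hS : (l.map η).prod ≤ ∑' p : {l : List (Option V × Option V) // SimplePath l}, (p.1.map η).prod := by
        rw [tsum_fintype]
        exact single_le_sum (f := fun p : {l : List (Option V × Option V) // SimplePath l} => (p.1.map η).prod)
          (fun p _ => (hnn η hη p).1) (mem_univ (⟨l, hSP⟩ : {l : List (Option V × Option V) // SimplePath l}))
      have hP : 0 < ∏ e ∈ E, η e ^ (c * α e) := prod_pos fun e he => Real.rpow_pos_of_pos (hη e he).1 _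
      have hPinv : ∏ e ∈ E, η e ^ (- (c * α e)) = (∏ e ∈ E, η e ^ (c * α e))⁻¹ := by
        rw [← prod_inv_distrib]
        exact prod_congr rfl fun e he => Real.rpow_neg (hη e he).1.le _
      calc (γ η) ^ s ≤ (((l.map η).prod)⁻¹) ^ s := by
            refine Real.rpow_le_rpow (inv_nonneg.2 (hpl.le.trans hS)) (inv_anti₀ hpl hS) hs0.le
        _ = (((l.map η).prod) ^ s)⁻¹ := Real.inv_rpow hpl.le _
        _ ≤ ((1 / (#E : ℝ)) ^ s * ∏ e ∈ E, η e ^ (c * α e))⁻¹ := inv_anti₀ (by positivity) hle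
        _ = _ := by
          rw [hPinv, mul_inv, one_div, Real.inv_rpow hn.le, inv_inv]
    · rw [lintegral_const_mul' _ _ ENNReal.ofReal_ne_top]
      exact ENNReal.mul_lt_top ENNReal.ofReal_lt_top hM
  · refine lt_of_le_of_lt (b := ∫⁻ η, ENNReal.ofReal
      ((Fintype.card {l : List (Option V × Option V) // SimplePath l} : ℝ) ^ (-s)) ∂μ)
      (lintegral_mono_ae ?_) ?_
    · filter_upwards [hsupp] with η ⟨hη, _⟩
      refine ENNReal.ofReal_le_ofReal ?_
      have h0 : 0 ≤ ∑' p : {l : List (Option V × Option V) // SimplePath l}, (p.1.map η).prod := by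
        rw [tsum_fintype]
        exact sum_nonneg fun p _ => (hnn η hη p).1
      have h1 : ∑' p : {l : List (Option V × Option V) // SimplePath l}, (p.1.map η).prod ≤
          (Fintype.card {l : List (Option V × Option V) // SimplePath l} : ℝ) := by
        rw [tsum_fintype]
        refine (sum_le_sum fun p _ => (hnn η hη p).2).trans ?_
        simp
      change (∑' p : {l : List (Option V × Option V) // SimplePath l}, (p.1.map η).prod)⁻¹ ^ s ≤ _
      rw [Real.inv_rpow h0, ← Real.rpow_neg h0]
      exact Real.rpow_le_rpow h0 h1 (by linarith)
    · rw [lintegral_const]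
      simp
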